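/- Let X be a complex Banach space with property (α) and let T: X→X be a bounded invertible operator. Then the set {T^k : k∈ℤ} is R-bounded if and only if there exists a bounded unital algebra homomorphism w: C(𝕋;ℂ)→B(X) such that w(κ)=T, where κ(z)=z. -/

import Mathlib

noncomputable section


/-- The sign `±1` (as a complex scalar) associated to a boolean. -/
def sgn (b : Bool) : ℂ := if b then 1 else -1

/-- Rademacher average `(2^{-n} Σ_{ε ∈ {±1}^n} ‖Σ_k ε_k x_k‖²)^{1/2}`. -/
def radNorm {X : Type*} [NormedAddCommGroup X] [NormedSpace ℂ X] {n : ℕ}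
    (x : Fin n → X) : ℝ :=
  Real.sqrt ((∑ ε : Fin n → Bool, ‖∑ k, sgn (ε k) • x k‖ ^ 2) / 2 ^ n)

/-- Doubly indexed Rademacher average
`(2^{-n-m} Σ_{ε ∈ {±1}^n, η ∈ {±1}^m} ‖Σ_{i,j} ε_i η_j x_{ij}‖²)^{1/2}`. -/
def radNorm2 {X : Type*} [NormedAddCommGroup X] [NormedSpace ℂ X] {n m : ℕ}
    (x : Fin n → Fin m → X) : ℝ :=
  Real.sqrt ((∑ ε : Fin n → Bool, ∑ η : Fin m → Bool,
    ‖∑ i, ∑ j, (sgn (ε i) * sgn (η j)) • x i j‖ ^ 2) / 2 ^ (n + m))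

/-- `X` has property (α) with constant `α`. -/
def PropAlphaWith (X : Type*) [NormedAddCommGroup X] [NormedSpace ℂ X]
    (α : ℝ) : Prop :=
  ∀ (n m : ℕ) (x : Fin n → Fin m → X) (t : Fin n → Fin m → ℂ),
    (∀ i j, ‖t i j‖ ≤ 1) →
      radNorm2 (fun i j => t i j • x i j) ≤ α * radNorm2 x

/-- The operator norm of a complex matrix, acting on the finite dimensional
ℓ²-space. -/
def matOpNorm {p : Type*} [Fintype p] [DecidableEq p] (a : Matrix p p ℂ) : ℝ :=
  ‖Matrix.toEuclideanCLM (𝕜 := ℂ) a‖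

/-- `F ⊆ B(X)` is R-bounded. -/
def RBdd {X : Type*} [NormedAddCommGroup X] [NormedSpace ℂ X]
    (F : Set (X →L[ℂ] X)) : Prop :=
  ∃ C : ℝ, 0 ≤ C ∧ ∀ (n : ℕ) (T : Fin n → X →L[ℂ] X) (x : Fin n → X),
    (∀ k, T k ∈ F) → radNorm (fun k => (T k) (x k)) ≤ C * radNorm x

/-- The identity function `κ(z) = z` on the unit circle, as a continuous map. -/
def kappa : C(Circle, ℂ) := ⟨fun z => (z : ℂ), by exact continuous_subtype_val⟩

lemma sgn_not (b : Bool) : sgn (!b) = - sgn b := by cases b <;> simp [sgn]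
lemma sgn_mul_self (b : Bool) : sgn b * sgn b = 1 := by cases b <;> simp [sgn]
lemma norm_sgn (b : Bool) : ‖sgn b‖ = 1 := by cases b <;> simp [sgn]
lemma conj_sgn (b : Bool) : (starRingEnd ℂ) (sgn b) = sgn b := by cases b <;> simp [sgn]

def flipEquiv {ι : Type*} [DecidableEq ι] (k : ι) : (ι → Bool) ≃ (ι → Bool) where
  toFun ε := Function.update ε k (!(ε k))
  invFun ε := Function.update ε k (!(ε k))
  left_inv ε := by simp
  right_inv ε := by simp

lemma sum_sgn_mul {ι : Type*} [Fintype ι] [DecidableEq ι] (k l : ι) :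
    ∑ ε : ι → Bool, sgn (ε k) * sgn (ε l) = if k = l then (2:ℂ) ^ Fintype.card ι else 0 := by
  split_ifs with h
  · subst h
    simp [sgn_mul_self]
  · have := Equiv.sum_comp (flipEquiv k) (fun ε : ι → Bool => sgn (ε k) * sgn (ε l))
    have h2 : ∀ ε : ι → Bool, sgn (flipEquiv k ε k) * sgn (flipEquiv k ε l)
        = - (sgn (ε k) * sgn (ε l)) := by
      intro ε
      simp [flipEquiv, Function.update_of_ne (Ne.symm h), sgn_not]
    simp only [h2, Finset.sum_neg_distrib] at this
    have h3 := self_eq_neg.mp this.symm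
    exact h3

section basic
variable {X : Type*} [NormedAddCommGroup X] [NormedSpace ℂ X]

def Qs {ι : Type*} [Fintype ι] [DecidableEq ι] (x : ι → X) : ℝ :=
  (∑ ε : ι → Bool, ‖∑ k, sgn (ε k) • x k‖ ^ 2) / 2 ^ Fintype.card ι

lemma Qs_nonneg {ι : Type*} [Fintype ι] [DecidableEq ι] (x : ι → X) : 0 ≤ Qs x := by
  unfold Qs; positivity

lemma radNorm_sq {n : ℕ} (x : Fin n → X) : radNorm x ^ 2 = Qs x := by
  unfold radNorm
  rw [Real.sq_sqrt (by positivity)]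
  simp [Qs]

lemma Qs_equiv {ι κ : Type*} [Fintype ι] [DecidableEq ι] [Fintype κ] [DecidableEq κ]
    (e : κ ≃ ι) (x : ι → X) : Qs (fun k => x (e k)) = Qs x := by
  unfold Qs
  rw [Fintype.card_congr e]
  congr 1
  rw [← Equiv.sum_comp (e.arrowCongr (Equiv.refl Bool))]
  refine Finset.sum_congr rfl fun ε _ => ?_
  congr 2
  rw [← Equiv.sum_comp e (fun k => sgn _ • x k)]
  simp

lemma Qs_smul_const {ι : Type*} [Fintype ι] [DecidableEq ι] (c : ι → ℂ) (y : X) :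
    Qs (fun k => c k • y) = (∑ k, ‖c k‖ ^ 2) * ‖y‖ ^ 2 := by
  have h1 : ∀ ε : ι → Bool, ‖∑ k, sgn (ε k) • c k • y‖ ^ 2
      = ‖∑ k, sgn (ε k) * c k‖ ^ 2 * ‖y‖ ^ 2 := by
    intro ε
    simp_rw [smul_smul, ← Finset.sum_smul, norm_smul, mul_pow]
  have h2 : ∑ ε : ι → Bool, ‖∑ k, sgn (ε k) * c k‖ ^ 2
      = 2 ^ Fintype.card ι * ∑ k, ‖c k‖ ^ 2 := by
    have : (∑ ε : ι → Bool, ((‖∑ k, sgn (ε k) * c k‖ ^ 2 : ℝ) : ℂ))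
      = ((2 ^ Fintype.card ι * ∑ k, ‖c k‖ ^ 2 : ℝ) : ℂ) := by
      have h3 : ∀ ε : ι → Bool, ((‖∑ k, sgn (ε k) * c k‖ ^ 2 : ℝ) : ℂ)
        = ∑ k, ∑ l, (c k * (starRingEnd ℂ) (c l)) * (sgn (ε k) * sgn (ε l)) := by
        intro ε
        push_cast
        rw [← Complex.mul_conj', map_sum, Finset.sum_mul_sum]
        refine Finset.sum_congr rfl fun k _ => Finset.sum_congr rfl fun l _ => ?_
        rw [map_mul, conj_sgn]; ring
      simp_rw [h3]
      rw [Finset.sum_comm]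
      simp_rw [Finset.sum_comm (s := (Finset.univ : Finset (ι → Bool)))]
      simp_rw [← Finset.mul_sum, sum_sgn_mul]
      simp [Complex.mul_conj', Finset.mul_sum, mul_comm]
    exact_mod_cast this
  unfold Qs
  simp_rw [h1]
  rw [← Finset.sum_mul, h2]
  field_simp

lemma RBdd.Qs_le {F : Set (X →L[ℂ] X)} (h : RBdd F) :
    ∃ C : ℝ, 0 ≤ C ∧ ∀ {ι : Type} [Fintype ι] [DecidableEq ι] (T : ι → X →L[ℂ] X) (x : ι → X),
      (∀ k, T k ∈ F) → Qs (fun k => T k (x k)) ≤ C ^ 2 * Qs x := by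
  obtain ⟨C, hC, h⟩ := h
  refine ⟨C, hC, ?_⟩
  intro ι _ _ T x hT
  let e := (Fintype.equivFin ι).symm
  have := h _ (fun k => T (e k)) (fun k => x (e k)) (fun k => hT _)
  rw [← Qs_equiv e, ← Qs_equiv e x, ← radNorm_sq, ← radNorm_sq, ← mul_pow]
  exact pow_le_pow_left₀ (Real.sqrt_nonneg _) this 2

lemma alpha_le {α : ℝ} (h : PropAlphaWith X α) {ι κ : Type} [Fintype ι] [DecidableEq ι]
    [Fintype κ] [DecidableEq κ] (x : ι → κ → X) (t : ι → κ → ℂ) (ht : ∀ i j, ‖t i j‖ ≤ 1) :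
    ∑ ε : ι → Bool, ∑ η : κ → Bool, ‖∑ i, ∑ j, (sgn (ε i) * sgn (η j)) • t i j • x i j‖ ^ 2 ≤
    α ^ 2 * ∑ ε : ι → Bool, ∑ η : κ → Bool, ‖∑ i, ∑ j, (sgn (ε i) * sgn (η j)) • x i j‖ ^ 2 := by
  let e := (Fintype.equivFin ι).symm
  let f := (Fintype.equivFin κ).symm
  have h0 := h _ _ (fun i j => x (e i) (f j)) (fun i j => t (e i) (f j)) (fun i j => ht _ _)
  have h1 := pow_le_pow_left₀ (Real.sqrt_nonneg _) h0 2
  rw [mul_pow] at h1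
  unfold radNorm2 at h1
  rw [Real.sq_sqrt (by positivity), Real.sq_sqrt (by positivity), ← mul_div_assoc,
    div_le_div_iff_of_pos_right (by positivity)] at h1
  have key : ∀ z : ι → κ → X,
    ∑ ε : ι → Bool, ∑ η : κ → Bool, ‖∑ i, ∑ j, (sgn (ε i) * sgn (η j)) • z i j‖ ^ 2 =
    ∑ ε : _ → Bool, ∑ η : _ → Bool,
      ‖∑ i, ∑ j, (sgn (ε i) * sgn (η j)) • z (e i) (f j)‖ ^ 2 := by
    intro z
    rw [← Equiv.sum_comp (e.arrowCongr (Equiv.refl Bool))]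
    refine Finset.sum_congr rfl fun ε _ => ?_
    rw [← Equiv.sum_comp (f.arrowCongr (Equiv.refl Bool))]
    refine Finset.sum_congr rfl fun η _ => ?_
    congr 2
    rw [← Equiv.sum_comp e]
    refine Finset.sum_congr rfl fun i _ => ?_
    rw [← Equiv.sum_comp f]
    simp
  rw [key, key]
  exact h1
end basic
lemma kappa_apply (z : Circle) : kappa z = (z : ℂ) := rfl

section backward
variable {X : Type*} [NormedAddCommGroup X] [NormedSpace ℂ X]

lemma backward_key {α : ℝ} (hα : PropAlphaWith X α) (w : C(Circle, ℂ) →ₐ[ℂ] (X →L[ℂ] X))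
    {M : ℝ} (hM0 : 0 ≤ M) (hM : ∀ f : C(Circle, ℂ), ‖w f‖ ≤ M * ‖f‖)
    {ι κ : Type} [Fintype ι] [DecidableEq ι] [Fintype κ] [DecidableEq κ]
    (ψ : κ → C(Circle, ℂ)) {B : ℝ}
    (hB : ∀ η : κ → Bool, ‖∑ j, sgn (η j) • ψ j‖ ≤ B) (t : ι → κ → ℂ)
    (ht : ∀ i j, ‖t i j‖ ≤ 1) (x : ι → X) :
    Qs (fun k => w (∑ j, t k j • (ψ j * ψ j)) (x k)) ≤ ((M * B) ^ 4 * α ^ 2) * Qs x := by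
  set m := Fintype.card κ
  set S : (κ → Bool) → X →L[ℂ] X := fun η => w (∑ j, sgn (η j) • ψ j) with hS
  have hSn : ∀ η, ‖S η‖ ≤ M * B := fun η =>
    (hM _).trans (mul_le_mul_of_nonneg_left (hB η) hM0)
  set V : (ι → Bool) → (κ → Bool) → X := fun ε η =>
    ∑ k, ∑ j, (sgn (ε k) * sgn (η j)) • t k j • w (ψ j) (x k) with hV
  have h1 : ∀ ε : ι → Bool, (2:ℂ) ^ m • ∑ k, sgn (ε k) • w (∑ j, t k j • (ψ j * ψ j)) (x k)
      = ∑ η, S η (V ε η) := by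
    intro ε
    simp only [hS, hV, map_sum, map_smul, map_mul, _root_.sum_apply,
      _root_.smul_apply, Finset.smul_sum]
    rw [Finset.sum_comm (s := (Finset.univ : Finset (κ → Bool)))]
    refine Finset.sum_congr rfl fun k _ => ?_
    rw [Finset.sum_comm (s := (Finset.univ : Finset (κ → Bool)))]
    refine Finset.sum_congr rfl fun j _ => ?_
    rw [Finset.sum_comm (s := (Finset.univ : Finset (κ → Bool)))]
    have : ∀ i, ∑ η : κ → Bool, (sgn (ε k) * sgn (η j)) • t k j • sgn (η i) • (w (ψ i)) ((w (ψ j)) (x k))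
      = (∑ η : κ → Bool, sgn (η i) * sgn (η j)) • (sgn (ε k) * t k j) • (w (ψ i)) ((w (ψ j)) (x k)) := by
      intro i
      rw [Finset.sum_smul]
      refine Finset.sum_congr rfl fun η _ => ?_
      simp only [smul_smul]
      congr 1; ring
    simp_rw [this, sum_sgn_mul]
    simp [m, smul_smul]
  have h2 : ∀ ε : ι → Bool, ‖∑ k, sgn (ε k) • w (∑ j, t k j • (ψ j * ψ j)) (x k)‖ ^ 2
      ≤ (M * B) ^ 2 / 2 ^ m * ∑ η, ‖V ε η‖ ^ 2 := by
    intro ε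
    have a1 := congrArg norm (h1 ε)
    rw [norm_smul] at a1
    simp only [norm_pow, Complex.norm_ofNat] at a1
    have a2 : ‖∑ η, S η (V ε η)‖ ≤ ∑ η, (M * B) * ‖V ε η‖ :=
      (norm_sum_le _ _).trans (Finset.sum_le_sum fun η _ =>
        ((S η).le_opNorm _).trans (mul_le_mul_of_nonneg_right (hSn η) (norm_nonneg _)))
    rw [← a1, ← Finset.mul_sum] at a2
    have a3 := pow_le_pow_left₀ (by positivity) a2 2
    have a4 := sq_sum_le_card_mul_sum_sq (s := (Finset.univ : Finset (κ → Bool)))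
      (f := fun η => ‖V ε η‖)
    simp only [Finset.card_univ, Fintype.card_fun, Fintype.card_bool, Nat.cast_pow,
      Nat.cast_ofNat] at a4
    rw [mul_pow, mul_pow] at a3
    have a5 := a3.trans (mul_le_mul_of_nonneg_left a4 (by positivity))
    have hp : (0:ℝ) < 2 ^ m := by positivity
    rw [div_mul_eq_mul_div, le_div_iff₀ hp]
    have : (2 ^ m) * (‖∑ k, sgn (ε k) • w (∑ j, t k j • (ψ j * ψ j)) (x k)‖ ^ 2 * 2 ^ m) ≤
      (2 ^ m) * ((M * B) ^ 2 * ∑ η, ‖V ε η‖ ^ 2) := by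
      refine le_trans (le_of_eq ?_) (a5.trans (le_of_eq ?_)) <;> ring
    exact le_of_mul_le_mul_left this hp
  have h3 := alpha_le hα (fun k j => w (ψ j) (x k)) t ht
  have h4 : ∀ (ε : ι → Bool) (η : κ → Bool), ‖∑ k, ∑ j, (sgn (ε k) * sgn (η j)) • w (ψ j) (x k)‖ ^ 2
      ≤ (M * B) ^ 2 * ‖∑ k, sgn (ε k) • x k‖ ^ 2 := by
    intro ε η
    have : ∑ k, ∑ j, (sgn (ε k) * sgn (η j)) • w (ψ j) (x k) = S η (∑ k, sgn (ε k) • x k) := by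
      simp only [hS, map_sum, map_smul, _root_.sum_apply,
        _root_.smul_apply, smul_smul, Finset.smul_sum]
    rw [this, ← mul_pow]
    exact pow_le_pow_left₀ (norm_nonneg _) (((S η).le_opNorm _).trans
      (mul_le_mul_of_nonneg_right (hSn η) (norm_nonneg _))) 2
  unfold Qs
  rw [← mul_div_assoc, div_le_div_iff_of_pos_right (by positivity)]
  calc _ ≤ ∑ ε : ι → Bool, (M * B) ^ 2 / 2 ^ m * ∑ η, ‖V ε η‖ ^ 2 :=
        Finset.sum_le_sum fun ε _ => h2 ε
    _ = (M * B) ^ 2 / 2 ^ m * ∑ ε : ι → Bool, ∑ η, ‖V ε η‖ ^ 2 := by rw [Finset.mul_sum]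
    _ ≤ (M * B) ^ 2 / 2 ^ m * (α ^ 2 * ∑ ε : ι → Bool, ∑ η : κ → Bool,
          (M * B) ^ 2 * ‖∑ k, sgn (ε k) • x k‖ ^ 2) := by
        refine mul_le_mul_of_nonneg_left (h3.trans ?_) (by positivity)
        refine mul_le_mul_of_nonneg_left ?_ (by positivity)
        exact Finset.sum_le_sum fun ε _ => Finset.sum_le_sum fun η _ => h4 ε η
    _ = _ := by
        simp only [Finset.sum_const, Finset.card_univ, Fintype.card_fun, Fintype.card_bool,
          nsmul_eq_mul, ← Finset.mul_sum]
        push_cast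
        field_simp
        try ring

def hat (t : ℝ) : ℝ := max 0 (1 - |t|)

lemma hat_nonneg (t : ℝ) : 0 ≤ hat t := le_max_left _ _
lemma hat_le_one (t : ℝ) : hat t ≤ 1 := max_le zero_le_one (by linarith [abs_nonneg t])
lemma abs_lt_of_hat {t : ℝ} (h : hat t ≠ 0) : |t| < 1 := by
  by_contra h'
  exact h (max_eq_left (by linarith))

lemma continuous_hat : Continuous hat := by unfold hat; fun_prop

abbrev Idx (N : ℕ) : Type := Finset.Icc (-(N:ℤ)) (N + 1)

lemma sum_idx {N : ℕ} {t : ℝ} (ht : |t| ≤ N) (g : ℝ → ℝ) (hg : ∀ s, hat s = 0 → g s = 0) :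
    ∑ i : Idx N, g (t - (i : ℤ)) = g (Int.fract t) + g (Int.fract t - 1) := by
  rw [Finset.sum_coe_sort (Finset.Icc (-(N:ℤ)) (N + 1)) (fun i => g (t - (i : ℤ)))]
  have hm := abs_le.mp ht
  have h1 : -(N:ℤ) ≤ ⌊t⌋ := Int.le_floor.mpr (by push_cast; linarith)
  have h2 : ⌊t⌋ ≤ N := by
    have := Int.floor_le t
    have : (⌊t⌋ : ℝ) ≤ (N:ℤ) := by push_cast; linarith
    exact_mod_cast this
  rw [← Finset.sum_subset (s₁ := {⌊t⌋, ⌊t⌋ + 1})]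
  · rw [Finset.sum_pair (by omega)]
    congr 2
    push_cast
    rw [← Int.self_sub_floor]; ring
  · intro i hi
    simp at hi ⊢
    omega
  · intro i _ hi
    apply hg
    simp at hi
    apply max_eq_left
    have f1 := Int.floor_le t
    have f2 := Int.lt_floor_add_one t
    rcases lt_or_gt_of_ne hi.1 with h | h
    · have : (i:ℝ) + 1 ≤ ⌊t⌋ := by exact_mod_cast h
      have := le_abs_self (t - i)
      linarith
    · have : ⌊t⌋ + 2 ≤ i := by omega
      have : (⌊t⌋:ℝ) + 2 ≤ i := by exact_mod_cast this
      have := neg_le_abs (t - i)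
      linarith

lemma sum_hat {N : ℕ} {t : ℝ} (ht : |t| ≤ N) : ∑ i : Idx N, hat (t - (i : ℤ)) = 1 := by
  rw [sum_idx ht hat (fun _ h => h)]
  have h0 := Int.fract_nonneg t
  have h1 := Int.fract_lt_one t
  unfold hat
  rw [abs_of_nonneg h0, abs_of_nonpos (by linarith), max_eq_right (by linarith),
    max_eq_right (by linarith)]
  ring

lemma sum_sqrt_hat {N : ℕ} {t : ℝ} (ht : |t| ≤ N) : ∑ i : Idx N, √(hat (t - (i : ℤ))) ≤ 2 := by
  rw [sum_idx ht (fun s => √(hat s)) (fun _ h => by simp [h])]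
  have : ∀ s, √(hat s) ≤ 1 := fun s => Real.sqrt_le_one.mpr (hat_le_one s)
  linarith [this (Int.fract t), this (Int.fract t - 1)]

def psiR (N : ℕ) (p : Idx N × Idx N) (z : Circle) : ℝ :=
  √(hat (N * (z:ℂ).re - (p.1 : ℤ))) * √(hat (N * (z:ℂ).im - (p.2 : ℤ)))

lemma continuous_psiR (N : ℕ) (p : Idx N × Idx N) : Continuous (psiR N p) := by
  unfold psiR
  have := continuous_hat
  have h1 : Continuous fun z : Circle => (z:ℂ).re := Complex.continuous_re.comp continuous_subtype_val
  have h2 : Continuous fun z : Circle => (z:ℂ).im := Complex.continuous_im.comp continuous_subtype_val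
  fun_prop

def psi (N : ℕ) (p : Idx N × Idx N) : C(Circle, ℂ) :=
  ⟨fun z => (psiR N p z : ℂ), Complex.continuous_ofReal.comp (continuous_psiR N p)⟩

lemma circle_bd (N : ℕ) (z : Circle) : |N * (z:ℂ).re| ≤ N ∧ |N * (z:ℂ).im| ≤ N := by
  have h1 := Complex.abs_re_le_norm (z:ℂ)
  have h2 := Complex.abs_im_le_norm (z:ℂ)
  rw [Circle.norm_coe] at h1 h2
  constructor <;> rw [abs_mul, Nat.abs_cast] <;> exact mul_le_of_le_one_right (by positivity) (by assumption)

lemma sum_psi_sq (N : ℕ) (z : Circle) : ∑ p, psiR N p z * psiR N p z = 1 := by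
  obtain ⟨h1, h2⟩ := circle_bd N z
  have : ∀ p, psiR N p z * psiR N p z
      = hat (N * (z:ℂ).re - (p.1 : ℤ)) * hat (N * (z:ℂ).im - (p.2 : ℤ)) := by
    intro p
    unfold psiR
    rw [mul_mul_mul_comm, Real.mul_self_sqrt (hat_nonneg _), Real.mul_self_sqrt (hat_nonneg _)]
  simp_rw [this]
  rw [Fintype.sum_prod_type]
  simp_rw [← Finset.mul_sum]
  rw [sum_hat h2]
  simpa using sum_hat h1

lemma sum_psi (N : ℕ) (z : Circle) : ∑ p, psiR N p z ≤ 4 := by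
  obtain ⟨h1, h2⟩ := circle_bd N z
  unfold psiR
  rw [Fintype.sum_prod_type]
  simp_rw [← Finset.mul_sum]
  rw [← Finset.sum_mul]
  have a1 := sum_sqrt_hat h1
  have a2 := sum_sqrt_hat h2
  calc _ ≤ (2:ℝ) * 2 := mul_le_mul a1 a2 (Finset.sum_nonneg fun _ _ => Real.sqrt_nonneg _) (by norm_num)
    _ = 4 := by norm_num

lemma psi_bound (N : ℕ) (η : Idx N × Idx N → Bool) : ‖∑ p, sgn (η p) • psi N p‖ ≤ 4 := by
  rw [ContinuousMap.norm_le _ (by norm_num)]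
  intro z
  rw [ContinuousMap.sum_apply]
  refine (norm_sum_le _ _).trans (le_trans (le_of_eq ?_) (sum_psi N z))
  refine Finset.sum_congr rfl fun p _ => ?_
  have : 0 ≤ psiR N p z := by unfold psiR; positivity
  simp [psi, norm_sgn, abs_of_nonneg this]

open Classical in
def pt (N : ℕ) (p : Idx N × Idx N) : Circle :=
  if h : ∃ z, psiR N p z ≠ 0 then h.choose else 1

lemma pt_close {N : ℕ} (hN : 0 < N) {p : Idx N × Idx N} {z : Circle} (h : psiR N p z ≠ 0) :
    dist z (pt N p) < 4 / N := by
  have hp : psiR N p (pt N p) ≠ 0 := by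
    have : ∃ z, psiR N p z ≠ 0 := ⟨z, h⟩
    unfold pt
    rw [dif_pos this]
    exact this.choose_spec
  have key : ∀ z, psiR N p z ≠ 0 → |N * (z:ℂ).re - (p.1 : ℤ)| < 1 ∧ |N * (z:ℂ).im - (p.2 : ℤ)| < 1 := by
    intro z h
    unfold psiR at h
    constructor
    · exact abs_lt_of_hat fun h' => h (by simp [h'])
    · exact abs_lt_of_hat fun h' => h (by simp [h'])
  obtain ⟨a1, a2⟩ := key _ h
  obtain ⟨b1, b2⟩ := key _ hp
  have hN' : (0:ℝ) < N := by exact_mod_cast hN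
  change dist (z:ℂ) (pt N p : ℂ) < _
  rw [Complex.dist_eq]
  refine (Complex.norm_le_abs_re_add_abs_im _).trans_lt ?_
  rw [lt_div_iff₀ hN', add_mul]
  simp only [Complex.sub_re, Complex.sub_im]
  rw [abs_lt] at a1 a2 b1 b2
  have c1 : |(z:ℂ).re - (pt N p : ℂ).re| * N < 2 := by
    rw [← Nat.abs_cast (R := ℝ) N, ← abs_mul, abs_lt]; constructor <;> linarith
  have c2 : |(z:ℂ).im - (pt N p : ℂ).im| * N < 2 := by
    rw [← Nat.abs_cast (R := ℝ) N, ← abs_mul, abs_lt]; constructor <;> linarith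
  linarith

lemma approx_tendsto (f : C(Circle, ℂ)) :
    Filter.Tendsto (fun N : ℕ => ∑ p, f (pt N p) • (psi N p * psi N p)) Filter.atTop (nhds f) := by
  rw [Metric.tendsto_atTop]
  intro δ hδ
  have huc := CompactSpace.uniformContinuous_of_continuous f.continuous
  obtain ⟨δ', hδ', h⟩ := (Metric.uniformContinuous_iff (α := Circle)).mp huc (δ / 2) (by positivity)
  obtain ⟨N0, hN0⟩ := exists_nat_gt (4 / δ')
  refine ⟨N0 + 1, fun N hN => ?_⟩
  have hNp : 0 < N := by omega
  have hN' : (0:ℝ) < N := by exact_mod_cast hNp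
  have hN4 : 4 / (N:ℝ) < δ' := by
    have : (N0:ℝ) + 1 ≤ N := by exact_mod_cast hN
    rw [div_lt_iff₀ hδ'] at hN0
    rw [div_lt_iff₀ hN']
    nlinarith
  refine lt_of_le_of_lt ?_ (half_lt_self hδ)
  rw [ContinuousMap.dist_le (by positivity)]
  intro z
  rw [ContinuousMap.sum_apply, dist_comm, Complex.dist_eq]
  have h1 : f z = ∑ p, f z * ((psiR N p z * psiR N p z : ℝ) : ℂ) := by
    rw [← Finset.mul_sum, ← Complex.ofReal_sum, sum_psi_sq]; simp
  rw [h1, ← Finset.sum_sub_distrib]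
  have h2 : δ / 2 = ∑ p, δ / 2 * (psiR N p z * psiR N p z) := by
    rw [← Finset.mul_sum, sum_psi_sq]; simp
  rw [h2]
  refine (norm_sum_le _ _).trans (Finset.sum_le_sum fun p _ => ?_)
  by_cases hz : psiR N p z = 0
  · simp [psi, hz]
  · have := h ((pt_close hNp hz).trans hN4)
    rw [Complex.dist_eq] at this
    have e : f z * ((psiR N p z * psiR N p z : ℝ) : ℂ) - (f (pt N p) • (psi N p * psi N p)) z
      = (f z - f (pt N p)) * ((psiR N p z * psiR N p z : ℝ) : ℂ) := by
      simp [psi]; ring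
    rw [e, norm_mul, Complex.norm_real, Real.norm_of_nonneg (mul_self_nonneg _)]
    exact mul_le_mul_of_nonneg_right this.le (mul_self_nonneg _)

lemma backward_bound {α : ℝ} (hα : PropAlphaWith X α) (w : C(Circle, ℂ) →ₐ[ℂ] (X →L[ℂ] X))
    {M : ℝ} (hM0 : 0 ≤ M) (hM : ∀ f : C(Circle, ℂ), ‖w f‖ ≤ M * ‖f‖)
    {ι : Type} [Fintype ι] [DecidableEq ι] (f : ι → C(Circle, ℂ)) (hf : ∀ k, ‖f k‖ ≤ 1)
    (x : ι → X) :
    Qs (fun k => w (f k) (x k)) ≤ ((M * 4) ^ 4 * α ^ 2) * Qs x := by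
  have hw : Continuous w := AddMonoidHomClass.continuous_of_bound w M hM
  have hc : Continuous (fun y : ι → X => Qs y) := by
    unfold Qs; fun_prop
  have ht : Filter.Tendsto (fun N : ℕ => (fun k =>
      w (∑ p, f k (pt N p) • (psi N p * psi N p)) (x k))) Filter.atTop
      (nhds (fun k => w (f k) (x k))) := by
    rw [tendsto_pi_nhds]
    intro k
    have h1 := (hw.tendsto (f k)).comp (approx_tendsto (f k))
    exact ((ContinuousLinearMap.apply ℂ X (x k)).continuous.tendsto _).comp h1
  refine le_of_tendsto' ((hc.tendsto _).comp ht) fun N => ?_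
  exact backward_key hα w hM0 hM (psi N) (psi_bound N) (fun k p => f k (pt N p))
    (fun k p => ((f k).norm_coe_le_norm _).trans (hf k)) x

lemma backward {α : ℝ} (hα : PropAlphaWith X α) (T : X ≃L[ℂ] X)
    (w : C(Circle, ℂ) →ₐ[ℂ] (X →L[ℂ] X)) (hT : w kappa = (T : X →L[ℂ] X))
    (hw : ∃ M : ℝ, ∀ f : C(Circle, ℂ), ‖w f‖ ≤ M * ‖f‖) :
    RBdd {S : X →L[ℂ] X | ∃ k : ℤ, S = (T ^ k : X ≃L[ℂ] X)} := by
  obtain ⟨M, hM⟩ := hw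
  have hM' : ∀ f : C(Circle, ℂ), ‖w f‖ ≤ |M| * ‖f‖ := fun f =>
    (hM f).trans (mul_le_mul_of_nonneg_right (le_abs_self M) (norm_nonneg _))
  have key : ∀ k : ℤ, ∃ f : C(Circle, ℂ), ‖f‖ ≤ 1 ∧ w f = ((T ^ k : X ≃L[ℂ] X) : X →L[ℂ] X) := by
    have hk : ‖kappa‖ ≤ 1 := by
      rw [ContinuousMap.norm_le _ zero_le_one]; intro z; exact (Circle.norm_coe z).le
    have hk' : ‖star kappa‖ ≤ 1 := by rwa [norm_star]
    have hs : w (star kappa) = ((T⁻¹ : X ≃L[ℂ] X) : X →L[ℂ] X) := by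
      have h1 : w (star kappa) * (T : X →L[ℂ] X) = 1 := by
        rw [← hT, ← map_mul, ← map_one w]
        congr 1
        ext z
        simp [kappa_apply, ← Circle.coe_inv_eq_conj]
      have h2 : (T : X →L[ℂ] X) * ((T⁻¹ : X ≃L[ℂ] X) : X →L[ℂ] X) = 1 := by
        ext y; exact T.apply_symm_apply y
      calc _ = w (star kappa) * ((T : X →L[ℂ] X) * ((T⁻¹ : X ≃L[ℂ] X) : X →L[ℂ] X)) := by
            rw [h2, mul_one]
        _ = _ := by rw [← mul_assoc, h1, one_mul]
    have hpow : ∀ (n : ℕ) (g : C(Circle, ℂ)) (U : X ≃L[ℂ] X), ‖g‖ ≤ 1 → w g = (U : X →L[ℂ] X) →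
        ∃ f : C(Circle, ℂ), ‖f‖ ≤ 1 ∧ w f = ((U ^ n : X ≃L[ℂ] X) : X →L[ℂ] X) := by
      intro n g U hg hU
      refine ⟨g ^ n, (norm_pow_le g n).trans (pow_le_one₀ (norm_nonneg _) hg), ?_⟩
      rw [map_pow, hU]
      induction n with
      | zero => rfl
      | succ n ih => rw [pow_succ, ih, pow_succ]; rfl
    intro k
    obtain ⟨n, rfl | rfl⟩ := k.eq_nat_or_neg
    · rw [zpow_natCast]; exact hpow n _ _ hk hT
    · rw [zpow_neg, zpow_natCast, ← inv_pow]; exact hpow n _ _ hk' hs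
  refine ⟨(|M| * 4) ^ 2 * |α|, by positivity, ?_⟩
  intro n S x hS
  have : ∀ k, ∃ f : C(Circle, ℂ), ‖f‖ ≤ 1 ∧ w f = S k := by
    intro k
    obtain ⟨m, hm⟩ := hS k
    rw [hm]; exact key m
  choose f hf1 hf2 using this
  have h := backward_bound hα w (abs_nonneg M) hM' f hf1 x
  simp only [hf2] at h
  rw [← radNorm_sq, ← radNorm_sq] at h
  refine le_of_sq_le_sq ?_ (mul_nonneg (by positivity) (Real.sqrt_nonneg _))
  rw [mul_pow, mul_pow, sq_abs, ← pow_mul]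
  exact h
end backward
section walk
open MeasureTheory ProbabilityTheory Filter Topology

def rs (b : Bool) : ℝ := if b then 1 else -1

lemma coe_rs (b : Bool) : ((rs b : ℝ) : ℂ) = sgn b := by cases b <;> simp [rs, sgn]

lemma sgn_beq (a b : Bool) : sgn (a == b) = sgn a * sgn b := by
  cases a <;> cases b <;> simp [sgn]

lemma cos_pow_tendsto (s : ℝ) :
    Tendsto (fun n : ℕ => Real.cos (s / √n) ^ n) atTop (𝓝 (Real.exp (-(s ^ 2) / 2))) := by
  have h : Tendsto (fun n : ℕ => (n:ℝ) * (Real.cos (s / √n) - 1)) atTop (𝓝 (-(s ^ 2) / 2)) := by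
    rw [tendsto_iff_norm_sub_tendsto_zero]
    have h0 : Tendsto (fun n : ℕ => (s ^ 4 * (5 / 96)) / (n:ℝ)) atTop (𝓝 0) :=
      tendsto_const_div_atTop_nhds_zero_nat _
    refine squeeze_zero' (Eventually.of_forall fun _ => norm_nonneg _) ?_ h0
    obtain ⟨N, hN⟩ := exists_nat_gt (s ^ 2)
    filter_upwards [eventually_ge_atTop (N + 1)] with n hn
    have hn1 : (N:ℝ) + 1 ≤ n := by exact_mod_cast hn
    have hn0 : (0:ℝ) < n := by have : (0:ℝ) ≤ N := by positivity
                               linarith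
    have hsq : √(n:ℝ) ^ 2 = n := Real.sq_sqrt hn0.le
    have hs0 : 0 < √(n:ℝ) := Real.sqrt_pos.mpr hn0
    have hx : |s / √n| ≤ 1 := by
      rw [abs_div, abs_of_pos hs0, div_le_one hs0]
      apply Real.abs_le_sqrt
      linarith
    have hb := Real.cos_bound hx
    have e1 : (n:ℝ) * (Real.cos (s / √n) - 1) - -(s ^ 2) / 2
        = n * (Real.cos (s / √n) - (1 - (s / √n) ^ 2 / 2)) := by
      rw [div_pow, hsq]; field_simp; ring
    have e2 : |s / √n| ^ 4 = s ^ 4 / n ^ 2 := by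
      rw [show (4:ℕ) = 2 * 2 from rfl, pow_mul, sq_abs, div_pow, hsq, div_pow, ← pow_mul]
    rw [e1, norm_mul, Real.norm_of_nonneg hn0.le, Real.norm_eq_abs]
    rw [e2] at hb
    refine (mul_le_mul_of_nonneg_left hb hn0.le).trans (le_of_eq ?_)
    field_simp
  have := Real.tendsto_one_add_pow_exp_of_tendsto h
  simpa using this

variable {ι : Type} [Fintype ι] [DecidableEq ι]

def wv (n : ℕ) (t : Fin n → ι → Bool) : EuclideanSpace ℝ ι :=
  WithLp.toLp 2 (fun j => (∑ i, rs (t i j)) / √n)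

def walk (ι : Type) [Fintype ι] [DecidableEq ι] (n : ℕ) : Measure (EuclideanSpace ℝ ι) :=
  (PMF.uniformOfFintype (Fin n → ι → Bool)).toMeasure.map (wv n)

lemma measurable_wv (n : ℕ) : Measurable (wv (ι := ι) n) := measurable_of_finite _

instance (n : ℕ) : IsProbabilityMeasure (walk ι n) :=
  Measure.isProbabilityMeasure_map (measurable_wv n).aemeasurable

lemma integral_walk {E : Type*} [NormedAddCommGroup E] [NormedSpace ℝ E] [CompleteSpace E]
    (n : ℕ) (f : EuclideanSpace ℝ ι → E) (hf : StronglyMeasurable f) :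
    ∫ v, f v ∂(walk ι n) = ((2:ℝ) ^ (n * Fintype.card ι))⁻¹ • ∑ t : Fin n → ι → Bool, f (wv n t) := by
  unfold walk
  rw [integral_map (measurable_wv n).aemeasurable hf.aestronglyMeasurable, PMF.integral_eq_sum,
    Finset.smul_sum]
  refine Finset.sum_congr rfl fun t _ => ?_
  congr 1
  simp [pow_mul, mul_comm n]

lemma charFun_walk (n : ℕ) (s : EuclideanSpace ℝ ι) :
    charFun (walk ι n) s = ((∏ j, Real.cos (s j / √n) ^ n : ℝ) : ℂ) := by
  rw [charFun_apply, integral_walk _ _ (Continuous.stronglyMeasurable (by fun_prop))]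
  have h1 : ∀ t : Fin n → ι → Bool, Complex.exp ((inner ℝ (wv n t) s : ℝ) * Complex.I)
      = ∏ i, ∏ j, Complex.exp (((rs (t i j) * (s j / √n) : ℝ) : ℂ) * Complex.I) := by
    intro t
    simp_rw [← Complex.exp_sum]
    congr 1
    simp_rw [← Finset.sum_mul]
    congr 1
    simp_rw [← Complex.ofReal_sum]
    congr 1
    rw [PiLp.inner_apply, Finset.sum_comm]
    refine Finset.sum_congr rfl fun j _ => ?_
    simp only [wv, RCLike.inner_apply, conj_trivial]
    rw [← Finset.sum_mul]; ring
  simp_rw [h1]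
  have h2 : ∑ t : Fin n → ι → Bool, ∏ i, ∏ j,
      Complex.exp (((rs (t i j) * (s j / √n) : ℝ) : ℂ) * Complex.I)
      = ∏ i : Fin n, ∏ j, ∑ b : Bool, Complex.exp (((rs b * (s j / √n) : ℝ) : ℂ) * Complex.I) := by
    simp_rw [Finset.prod_univ_sum, Fintype.piFinset_univ]
  rw [h2]
  have h3 : ∀ j, ∑ b : Bool, Complex.exp (((rs b * (s j / √n) : ℝ) : ℂ) * Complex.I)
      = 2 * ((Real.cos (s j / √n) : ℝ) : ℂ) := by
    intro j
    rw [Complex.ofReal_cos, Complex.two_cos]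
    simp [rs]
  simp_rw [h3]
  simp only [Finset.prod_const, Finset.card_univ, Fintype.card_fin, Finset.prod_mul_distrib, mul_pow]
  rw [← pow_mul, mul_comm (Fintype.card ι), Finset.prod_pow]
  rw [Complex.real_smul]
  push_cast
  rw [← mul_assoc, inv_mul_cancel₀ (pow_ne_zero _ two_ne_zero), one_mul]

def walkP (ι : Type) [Fintype ι] [DecidableEq ι] (n : ℕ) :
    ProbabilityMeasure (EuclideanSpace ℝ ι) := ⟨walk ι n, inferInstance⟩

def gaussP (ι : Type) [Fintype ι] :
    ProbabilityMeasure (EuclideanSpace ℝ ι) := ⟨stdGaussian (EuclideanSpace ℝ ι), inferInstance⟩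

lemma walk_tendsto : Tendsto (fun n => walkP ι n) atTop (𝓝 (gaussP ι)) := by
  apply ProbabilityMeasure.tendsto_of_tendsto_charFun
  intro s
  change Tendsto (fun n => charFun (walk ι n) s) atTop (𝓝 (charFun (stdGaussian _) s))
  simp_rw [charFun_walk]
  rw [charFun_stdGaussian]
  have : Complex.exp (-(‖s‖ : ℂ) ^ 2 / 2) = ((∏ j, Real.exp (-(s j) ^ 2 / 2) : ℝ) : ℂ) := by
    rw [← Real.exp_sum, EuclideanSpace.norm_eq, ← Complex.ofReal_pow,
      Real.sq_sqrt (by positivity), Complex.ofReal_exp]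
    congr 1
    rw [← Finset.sum_div, Finset.sum_neg_distrib]
    simp only [Real.norm_eq_abs, sq_abs]
    push_cast
    rfl
  rw [this]
  exact (Complex.continuous_ofReal.tendsto _).comp
    (tendsto_finsetProd _ fun j _ => cos_pow_tendsto (s j))

variable {X : Type*} [NormedAddCommGroup X] [NormedSpace ℂ X]

def PhiX (x : ι → X) : EuclideanSpace ℝ ι →L[ℝ] X :=
  ∑ j, (EuclideanSpace.proj j : EuclideanSpace ℝ ι →L[ℝ] ℝ).smulRight (x j)

lemma PhiX_apply (x : ι → X) (v : EuclideanSpace ℝ ι) : PhiX x v = ∑ j, v j • x j := by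
  simp [PhiX]

def gs (x : ι → X) : ℝ := ∫ v, ‖PhiX x v‖ ^ 2 ∂(stdGaussian (EuclideanSpace ℝ ι))

def tw {n : ℕ} (ε : Fin n → Bool) (η : ι → Bool) : (Fin n → ι → Bool) ≃ (Fin n → ι → Bool) where
  toFun t := fun i j => (ε i == η j) == t i j
  invFun t := fun i j => (ε i == η j) == t i j
  left_inv t := by
    funext i j
    show ((ε i == η j) == ((ε i == η j) == t i j)) = t i j
    cases ε i <;> cases η j <;> cases t i j <;> rfl
  right_inv t := by
    funext i j
    show ((ε i == η j) == ((ε i == η j) == t i j)) = t i j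
    cases ε i <;> cases η j <;> cases t i j <;> rfl

lemma walk_bound {α : ℝ} (hα : PropAlphaWith X α) (x : ι → X) (n : ℕ) :
    ∑ t : Fin n → ι → Bool, ‖∑ i, ∑ j, sgn (t i j) • x j‖ ^ 2
      ≤ 2 ^ (n * Fintype.card ι) * (n * (α ^ 2 * Qs x)) := by
  set W := ∑ t : Fin n → ι → Bool, ‖∑ i, ∑ j, sgn (t i j) • x j‖ ^ 2 with hW
  have h1 : ∀ (ε : Fin n → Bool) (η : ι → Bool), ∑ t : Fin n → ι → Bool,
      ‖∑ i, ∑ j, (sgn (ε i) * sgn (η j)) • sgn (t i j) • x j‖ ^ 2 = W := by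
    intro ε η
    rw [hW, ← Equiv.sum_comp (tw ε η) (fun t => ‖∑ i, ∑ j, sgn (t i j) • x j‖ ^ 2)]
    simp only [tw, Equiv.coe_fn_mk, sgn_beq, smul_smul]
  have h2 := Finset.sum_le_sum fun (t : Fin n → ι → Bool) (_ : t ∈ Finset.univ) =>
    alpha_le hα (fun (i : Fin n) j => x j) (fun i j => sgn (t i j)) (fun i j => (norm_sgn _).le)
  rw [Finset.sum_comm] at h2
  simp_rw [Finset.sum_comm (s := (Finset.univ : Finset (Fin n → ι → Bool))), h1] at h2
  have h3 : ∀ (ε : Fin n → Bool) (η : ι → Bool), ‖∑ i, ∑ j, (sgn (ε i) * sgn (η j)) • x j‖ ^ 2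
      = ‖∑ i, sgn (ε i) • (1:ℂ) • (1:ℂ)‖ ^ 2 * ‖∑ j, sgn (η j) • x j‖ ^ 2 := by
    intro ε η
    rw [← mul_pow, ← norm_smul, Finset.sum_smul]
    simp [Finset.smul_sum, smul_smul]
  simp_rw [h3, ← Finset.mul_sum] at h2
  rw [← Finset.sum_mul] at h2
  have h4 := Qs_smul_const (X := ℂ) (fun _ : Fin n => (1:ℂ)) 1
  unfold Qs at h4
  rw [div_eq_iff (by positivity)] at h4
  rw [h4] at h2
  have h5 : ∑ η : ι → Bool, ‖∑ j, sgn (η j) • x j‖ ^ 2 = 2 ^ Fintype.card ι * Qs x := by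
    unfold Qs; field_simp
  rw [h5] at h2
  simp only [Finset.sum_const, Finset.card_univ, Fintype.card_fun, Fintype.card_bool,
    Fintype.card_fin, nsmul_eq_mul, Nat.cast_pow, Nat.cast_ofNat, norm_one, one_pow, mul_one] at h2
  have hp : (0:ℝ) < 2 ^ n * 2 ^ Fintype.card ι := by positivity
  refine le_of_mul_le_mul_left (le_trans (le_of_eq ?_) (h2.trans (le_of_eq ?_))) hp
  · ring
  · rw [← pow_mul, mul_comm n]; ring

lemma walk_integral_bound {α : ℝ} (hα : PropAlphaWith X α) (x : ι → X) {n : ℕ} (hn : 0 < n) (K : ℝ) :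
    ∫ v, min (‖PhiX x v‖ ^ 2) K ∂(walk ι n) ≤ α ^ 2 * Qs x := by
  have hn' : (0:ℝ) < n := by exact_mod_cast hn
  rw [integral_walk _ _ (Continuous.stronglyMeasurable (by fun_prop)), smul_eq_mul,
    inv_mul_le_iff₀ (by positivity)]
  have h1 : ∀ t : Fin n → ι → Bool, ‖PhiX x (wv n t)‖ ^ 2
      = ‖∑ i, ∑ j, sgn (t i j) • x j‖ ^ 2 / n := by
    intro t
    have : PhiX x (wv n t) = (√n : ℝ)⁻¹ • ∑ i, ∑ j, sgn (t i j) • x j := by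
      rw [PhiX_apply, Finset.sum_comm, Finset.smul_sum]
      refine Finset.sum_congr rfl fun j _ => ?_
      simp only [wv]
      rw [div_eq_inv_mul, mul_smul, Finset.sum_smul]
      congr 1
      refine Finset.sum_congr rfl fun i _ => ?_
      rw [← coe_rs, Complex.coe_smul]
    rw [this, norm_smul, mul_pow, norm_inv, Real.norm_of_nonneg (Real.sqrt_nonneg _), inv_pow,
      Real.sq_sqrt hn'.le]
    field_simp
  calc _ ≤ ∑ t : Fin n → ι → Bool, ‖PhiX x (wv n t)‖ ^ 2 :=
        Finset.sum_le_sum fun t _ => min_le_left _ _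
    _ = (∑ t : Fin n → ι → Bool, ‖∑ i, ∑ j, sgn (t i j) • x j‖ ^ 2) / n := by
        simp_rw [h1]; rw [Finset.sum_div]
    _ ≤ _ := by
        rw [div_le_iff₀ hn']
        refine (walk_bound hα x n).trans (le_of_eq (by ring))

lemma integrable_PhiX (x : ι → X) (μ : Measure (EuclideanSpace ℝ ι)) [IsGaussian μ] :
    Integrable (fun v => ‖PhiX x v‖ ^ 2) μ :=
  ((PhiX x).comp_memLp' (IsGaussian.memLp_two_id (μ := μ))).integrable_norm_pow (by norm_num)

lemma gs_le {α : ℝ} (hα : PropAlphaWith X α) (x : ι → X) : gs x ≤ α ^ 2 * Qs x := by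
  have h1 : ∀ K : ℕ, ∫ v, min (‖PhiX x v‖ ^ 2) K ∂(stdGaussian (EuclideanSpace ℝ ι)) ≤ α ^ 2 * Qs x := by
    intro K
    let f : BoundedContinuousFunction (EuclideanSpace ℝ ι) ℝ :=
      BoundedContinuousFunction.ofNormedAddCommGroup (fun v => min (‖PhiX x v‖ ^ 2) (K:ℝ))
        (by fun_prop) K (by
          intro v
          rw [Real.norm_of_nonneg (by positivity)]
          exact min_le_right _ _)
    have := (ProbabilityMeasure.tendsto_iff_forall_integral_tendsto.mp (walk_tendsto (ι := ι))) f
    refine le_of_tendsto this ?_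
    filter_upwards [eventually_gt_atTop 0] with n hn
    exact walk_integral_bound hα x hn K
  have h2 : Tendsto (fun K : ℕ => ∫ v, min (‖PhiX x v‖ ^ 2) (K:ℝ) ∂(stdGaussian (EuclideanSpace ℝ ι)))
      atTop (𝓝 (gs x)) := by
    refine tendsto_integral_of_dominated_convergence (fun v => ‖PhiX x v‖ ^ 2) ?_
      (integrable_PhiX x _) ?_ ?_
    · intro K
      exact Continuous.aestronglyMeasurable (by fun_prop)
    · intro K
      refine Eventually.of_forall fun v => ?_
      rw [Real.norm_of_nonneg (by positivity)]
      exact min_le_left _ _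
    · refine Eventually.of_forall fun v => ?_
      obtain ⟨N, hN⟩ := exists_nat_gt (‖PhiX x v‖ ^ 2)
      refine tendsto_const_nhds.congr' ?_
      filter_upwards [eventually_ge_atTop N] with K hK
      have : (N:ℝ) ≤ K := by exact_mod_cast hK
      exact (min_eq_left (by linarith)).symm
  exact le_of_tendsto' h2 h1
end walk
section gauss
open MeasureTheory ProbabilityTheory Filter Topology

lemma jensen_sq {Ω E : Type*} [MeasurableSpace Ω] {P : Measure Ω} [IsProbabilityMeasure P]
    [NormedAddCommGroup E] [NormedSpace ℝ E] {f : Ω → E} (hf : MemLp f 2 P) :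
    ‖∫ a, f a ∂P‖ ^ 2 ≤ ∫ a, ‖f a‖ ^ 2 ∂P := by
  have h1 : ‖∫ a, f a ∂P‖ ≤ ∫ a, ‖f a‖ ∂P := norm_integral_le_integral_norm _
  have h2 := variance_nonneg (fun a => ‖f a‖) P
  rw [variance_eq_sub hf.norm] at h2
  have h3 : ‖∫ a, f a ∂P‖ ^ 2 ≤ (∫ a, ‖f a‖ ∂P) ^ 2 := by gcongr
  simp only [Pi.pow_apply] at h2
  linarith

lemma rs_beq (a b : Bool) : rs (a == b) = rs a * rs b := by
  cases a <;> cases b <;> simp [rs]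

lemma rs_sgn (r : ℝ) : rs (decide (0 ≤ r)) * r = |r| := by
  by_cases h : 0 ≤ r
  · simp [rs, h, abs_of_nonneg h]
  · simp [rs, h, abs_of_neg (not_le.mp h)]

variable {ι : Type} [Fintype ι] [DecidableEq ι]

def gm : ℝ := ∫ t, |t| ∂(gaussianReal 0 1)

lemma gm_pos : 0 < gm := by
  unfold gm
  have hi : Integrable (fun t : ℝ => |t|) (gaussianReal 0 1) :=
    (IsGaussian.integrable_id (μ := gaussianReal 0 1)).abs
  rw [integral_pos_iff_support_of_nonneg (fun t => abs_nonneg t) hi]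
  have : Function.support (fun t : ℝ => |t|) = {0}ᶜ := by
    ext t; simp
  rw [this]
  have : NullSingletonClass (gaussianReal 0 1) := nullSingletonClass_gaussianReal one_ne_zero
  rw [prob_compl_eq_one_sub (measurableSet_singleton _), measure_singleton]
  simp

lemma integral_abs_coord (j : ι) :
    ∫ v, |v j| ∂(stdGaussian (EuclideanSpace ℝ ι)) = gm := by
  have h := measurePreserving_eval_multivariateGaussian (μ := (0 : EuclideanSpace ℝ ι))
    (S := (1 : Matrix ι ι ℝ)) Matrix.PosSemidef.one (i := j)
  rw [multivariateGaussian_zero_one] at h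
  simp only [PiLp.zero_apply, Matrix.one_apply_eq, Real.toNNReal_one] at h
  unfold gm
  rw [← h.map_eq, integral_map h.measurable.aemeasurable (by fun_prop)]

def flipE (ε : ι → Bool) : EuclideanSpace ℝ ι ≃ₗᵢ[ℝ] EuclideanSpace ℝ ι :=
  LinearIsometryEquiv.piLpCongrRight 2 (fun j => if ε j then LinearIsometryEquiv.refl ℝ ℝ
    else LinearIsometryEquiv.neg ℝ)

lemma flipE_apply (ε : ι → Bool) (v : EuclideanSpace ℝ ι) (j : ι) :
    flipE ε v j = rs (ε j) * v j := by
  simp only [flipE, LinearIsometryEquiv.piLpCongrRight_apply]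
  cases ε j <;> simp [rs]

def beqE (η : ι → Bool) : (ι → Bool) ≃ (ι → Bool) where
  toFun t := fun j => t j == η j
  invFun t := fun j => t j == η j
  left_inv t := by
    funext j
    show ((t j == η j) == η j) = t j
    cases η j <;> cases t j <;> rfl
  right_inv t := by
    funext j
    show ((t j == η j) == η j) = t j
    cases η j <;> cases t j <;> rfl

variable {X : Type*} [NormedAddCommGroup X] [NormedSpace ℂ X]

lemma memLp_coord (j : ι) (μ : Measure (EuclideanSpace ℝ ι)) [IsGaussian μ] :
    MemLp (fun v : EuclideanSpace ℝ ι => v j) 2 μ :=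
  (EuclideanSpace.proj j : EuclideanSpace ℝ ι →L[ℝ] ℝ).comp_memLp' (IsGaussian.memLp_two_id (μ := μ))

lemma Qs_le_gs [CompleteSpace X] (x : ι → X) : gm ^ 2 * Qs x ≤ gs x := by
  set γ := stdGaussian (EuclideanSpace ℝ ι) with hγ
  set F : (ι → Bool) → EuclideanSpace ℝ ι → X := fun ε v => ∑ j, (rs (ε j) * |v j|) • x j with hF
  have hFm : ∀ ε, MemLp (F ε) 2 γ := by
    intro ε
    refine memLp_finsetSum _ fun j _ => ?_
    have : MemLp (fun v : EuclideanSpace ℝ ι => rs (ε j) * |v j|) 2 γ :=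
      (memLp_coord j γ).abs.const_mul _
    have h2 := ((ContinuousLinearMap.id ℝ ℝ).smulRight (x j)).comp_memLp' this
    exact h2
  have hFi : ∀ ε, ∫ v, F ε v ∂γ = (gm : ℂ) • ∑ j, sgn (ε j) • x j := by
    intro ε
    rw [integral_finsetSum]
    · rw [Finset.smul_sum]
      refine Finset.sum_congr rfl fun j _ => ?_
      rw [integral_smul_const, integral_const_mul, integral_abs_coord, ← coe_rs, smul_smul,
        ← Complex.ofReal_mul, Complex.coe_smul, mul_comm]
    · intro j _
      exact (((memLp_coord j γ).abs.const_mul _).integrable (by norm_num)).smul_const _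
  have h1 : ∀ ε : ι → Bool, gs x = ∫ v, ‖PhiX x (flipE ε v)‖ ^ 2 ∂γ := by
    intro ε
    unfold gs
    rw [← integral_map (f := fun v => ‖PhiX x v‖ ^ 2) (flipE ε).continuous.measurable.aemeasurable
      (Continuous.aestronglyMeasurable (by fun_prop)), stdGaussian_map]
  have h2 : ∀ v, ∑ ε : ι → Bool, ‖PhiX x (flipE ε v)‖ ^ 2 = ∑ ε : ι → Bool, ‖F ε v‖ ^ 2 := by
    intro v
    rw [← Equiv.sum_comp (beqE (fun j => decide (0 ≤ v j)))]
    refine Finset.sum_congr rfl fun ε _ => ?_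
    rw [PhiX_apply]
    simp only [flipE_apply, beqE, Equiv.coe_fn_mk, rs_beq, mul_assoc, rs_sgn, hF]
  have h3 : (2:ℝ) ^ Fintype.card ι * gs x = ∑ ε : ι → Bool, ∫ v, ‖F ε v‖ ^ 2 ∂γ := by
    rw [← integral_finsetSum]
    · simp_rw [← h2]
      rw [integral_finsetSum]
      · simp_rw [← h1]
        simp
      · intro ε _
        have := ((PhiX x).comp ((flipE ε).toContinuousLinearEquiv : EuclideanSpace ℝ ι →L[ℝ] _)).comp_memLp' (IsGaussian.memLp_two_id (μ := γ))
        exact this.integrable_norm_pow (by norm_num)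
    · intro ε _
      exact (hFm ε).integrable_norm_pow (by norm_num)
  have h4 : gm ^ 2 * ∑ ε : ι → Bool, ‖∑ j, sgn (ε j) • x j‖ ^ 2 ≤ 2 ^ Fintype.card ι * gs x := by
    rw [h3, Finset.mul_sum]
    refine Finset.sum_le_sum fun ε _ => ?_
    refine le_trans (le_of_eq ?_) (jensen_sq (hFm ε))
    rw [hFi, norm_smul, mul_pow]
    simp
  unfold Qs
  rw [← mul_div_assoc, div_le_iff₀ (by positivity)]
  linarith

lemma gs_mat [CompleteSpace X] {κ : Type} [Fintype κ] [DecidableEq κ] (B : κ → ι → ℝ)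
    (hB : ∀ u : ι → ℝ, ∑ i, (∑ j, B i j * u j) ^ 2 ≤ ∑ j, u j ^ 2) (x : ι → X) :
    gs (fun i => ∑ j, B i j • x j) ≤ gs x := by
  let M : Matrix κ ι ℝ := Matrix.of B
  let S : Matrix ι ι ℝ := 1 - M.transpose * M
  have hq : ∀ u : ι → ℝ, dotProduct u (S.mulVec u) = ∑ j, u j ^ 2 - ∑ i, (∑ j, B i j * u j) ^ 2 := by
    intro u
    simp only [S]
    rw [Matrix.sub_mulVec, dotProduct_sub, Matrix.one_mulVec, ← Matrix.mulVec_mulVec,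
      Matrix.dotProduct_mulVec, Matrix.vecMul_transpose]
    simp only [dotProduct, Matrix.mulVec, M, Matrix.of_apply, sq]
  have hS : S.PosSemidef := by
    refine Matrix.PosSemidef.of_dotProduct_mulVec_nonneg ?_ ?_
    · simp only [S, Matrix.IsHermitian]
      simp [Matrix.conjTranspose_eq_transpose_of_trivial]
    · intro u
      rw [star_trivial, hq]
      linarith [hB u]
  let L : EuclideanSpace ℝ κ →L[ℝ] EuclideanSpace ℝ ι :=
    ∑ i, (EuclideanSpace.proj i : EuclideanSpace ℝ κ →L[ℝ] ℝ).smulRight (WithLp.toLp 2 (B i))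
  have hL : ∀ v j, L v j = ∑ i, v i * B i j := by
    intro v j
    simp [L]
  let μ : Measure (EuclideanSpace ℝ ι) := (stdGaussian (EuclideanSpace ℝ κ)).map L
  let ν : Measure (EuclideanSpace ℝ ι) := multivariateGaussian 0 S
  have hμ : IsGaussian μ := by simp only [μ]; infer_instance
  have hconv : μ ∗ ν = stdGaussian (EuclideanSpace ℝ ι) := by
    apply Measure.ext_of_charFun
    funext t
    rw [charFun_conv, charFun_multivariateGaussian hS, charFun_stdGaussian]
    have h1 : charFun μ t = charFun (stdGaussian (EuclideanSpace ℝ κ))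
        (WithLp.toLp 2 (fun i => ∑ j, B i j * t j)) := by
      simp only [μ]
      rw [charFun_apply, charFun_apply, integral_map (by fun_prop) (by fun_prop)]
      congr 1
      funext v
      congr 3
      rw [PiLp.inner_apply, PiLp.inner_apply]
      simp only [hL, RCLike.inner_apply, conj_trivial, Finset.mul_sum, Finset.sum_mul]
      rw [Finset.sum_comm]
      refine Finset.sum_congr rfl fun i _ => Finset.sum_congr rfl fun j _ => by ring
    rw [h1, charFun_stdGaussian, ← Complex.exp_add, hq]
    congr 1
    rw [inner_zero_right, ← Complex.ofReal_pow, ← Complex.ofReal_pow, EuclideanSpace.norm_sq_eq,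
      EuclideanSpace.norm_sq_eq]
    simp only [Real.norm_eq_abs, sq_abs]
    push_cast
    ring
  have hi := integrable_PhiX x (stdGaussian (EuclideanSpace ℝ ι))
  have hgs : gs x = ∫ a, ∫ b, ‖PhiX x (a + b)‖ ^ 2 ∂ν ∂μ := by
    unfold gs
    rw [← hconv] at hi ⊢
    rw [integral_conv hi]
  have hi2 : Integrable (fun a => ∫ b, ‖PhiX x (a + b)‖ ^ 2 ∂ν) μ := by
    rw [← hconv, integrable_conv_iff (Continuous.aestronglyMeasurable (by fun_prop))] at hi
    simpa using hi.2
  have hlhs : gs (fun i => ∑ j, B i j • x j) = ∫ a, ‖PhiX x a‖ ^ 2 ∂μ := by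
    simp only [μ]
    rw [integral_map (by fun_prop) (by fun_prop)]
    unfold gs
    congr 1
    funext v
    congr 2
    rw [PhiX_apply, PhiX_apply]
    simp only [hL, Finset.smul_sum, Finset.sum_smul, smul_smul]
    rw [Finset.sum_comm]
  rw [hlhs, hgs]
  refine integral_mono (integrable_PhiX x μ) hi2 fun a => ?_
  have hm : MemLp (fun b => PhiX x (a + b)) 2 ν :=
    (PhiX x).comp_memLp' ((memLp_const a).add (IsGaussian.memLp_two_id (μ := ν)))
  refine le_trans (le_of_eq ?_) (jensen_sq hm)
  congr 2
  simp only [map_add]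
  have hP : Integrable (fun b => PhiX x b) ν :=
    ((PhiX x).comp_memLp' (IsGaussian.memLp_two_id (μ := ν))).integrable (by norm_num)
  rw [integral_add (integrable_const _) hP,
    ContinuousLinearMap.integral_comp_comm _ IsGaussian.integrable_fun_id,
    integral_id_multivariateGaussian]
  simp

lemma Qs_add_le (a b : ι → X) : Qs (fun i => a i + b i) ≤ 2 * Qs a + 2 * Qs b := by
  unfold Qs
  rw [← mul_div_assoc, ← mul_div_assoc, ← add_div, Finset.mul_sum, Finset.mul_sum,
    ← Finset.sum_add_distrib]
  gcongr with ε _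
  simp only [smul_add, Finset.sum_add_distrib]
  have := norm_add_le (∑ k, sgn (ε k) • a k) (∑ k, sgn (ε k) • b k)
  nlinarith [norm_nonneg (∑ k, sgn (ε k) • a k + ∑ k, sgn (ε k) • b k),
    sq_nonneg (‖∑ k, sgn (ε k) • a k‖ - ‖∑ k, sgn (ε k) • b k‖)]

lemma Qs_smul (c : ℂ) (a : ι → X) : Qs (fun i => c • a i) = ‖c‖ ^ 2 * Qs a := by
  unfold Qs
  rw [← mul_div_assoc, Finset.mul_sum]
  congr 1
  refine Finset.sum_congr rfl fun ε _ => ?_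
  rw [← mul_pow, ← norm_smul, Finset.smul_sum]
  simp only [smul_comm c]

lemma Qs_mat_real [CompleteSpace X] {α : ℝ} (hα : PropAlphaWith X α)
    {κ : Type} [Fintype κ] [DecidableEq κ] (B : κ → ι → ℝ)
    (hB : ∀ u : ι → ℝ, ∑ i, (∑ j, B i j * u j) ^ 2 ≤ ∑ j, u j ^ 2) (x : ι → X) :
    gm ^ 2 * Qs (fun i => ∑ j, B i j • x j) ≤ α ^ 2 * Qs x :=
  (Qs_le_gs _).trans ((gs_mat B hB x).trans (gs_le hα x))

lemma Qs_mat [CompleteSpace X] {α : ℝ} (hα : PropAlphaWith X α)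
    {κ : Type} [Fintype κ] [DecidableEq κ] (A : κ → ι → ℂ) {c : ℝ} (hc : 0 < c)
    (hA : ∀ u : ι → ℝ, ∑ i, ‖∑ j, A i j * u j‖ ^ 2 ≤ c ^ 2 * ∑ j, u j ^ 2) (x : ι → X) :
    gm ^ 2 * Qs (fun i => ∑ j, A i j • x j) ≤ 4 * c ^ 2 * α ^ 2 * Qs x := by
  have hre : ∀ (u : ι → ℝ) i, (∑ j, (A i j).re / c * u j) ^ 2 + (∑ j, (A i j).im / c * u j) ^ 2
      = ‖∑ j, A i j * u j‖ ^ 2 / c ^ 2 := by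
    intro u i
    rw [Complex.sq_norm, Complex.normSq_apply, Complex.re_sum, Complex.im_sum]
    simp only [Complex.re_mul_ofReal, Complex.im_mul_ofReal]
    have e1 : ∀ f : ι → ℝ, ∑ j, f j / c * u j = (∑ j, f j * u j) / c := by
      intro f
      rw [Finset.sum_div]
      exact Finset.sum_congr rfl fun j _ => by ring
    rw [e1, e1]
    ring
  have hsum : ∀ u : ι → ℝ, ∑ i, (∑ j, (A i j).re / c * u j) ^ 2
      + ∑ i, (∑ j, (A i j).im / c * u j) ^ 2 ≤ ∑ j, u j ^ 2 := by
    intro u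
    rw [← Finset.sum_add_distrib]
    simp_rw [hre]
    rw [← Finset.sum_div, div_le_iff₀ (by positivity), mul_comm]
    exact hA u
  have h1 := Qs_mat_real hα (fun i j => (A i j).re / c) (fun u => by
    have : 0 ≤ ∑ i, (∑ j, (A i j).im / c * u j) ^ 2 := by positivity
    linarith [hsum u]) x
  have h2 := Qs_mat_real hα (fun i j => (A i j).im / c) (fun u => by
    have : 0 ≤ ∑ i, (∑ j, (A i j).re / c * u j) ^ 2 := by positivity
    linarith [hsum u]) x
  have h3 : (fun i => ∑ j, A i j • x j) = fun i => (c:ℂ) • ((∑ j, ((A i j).re / c) • x j)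
      + Complex.I • ∑ j, ((A i j).im / c) • x j) := by
    funext i
    rw [Finset.smul_sum, ← Finset.sum_add_distrib, Finset.smul_sum]
    refine Finset.sum_congr rfl fun j _ => ?_
    rw [← Complex.coe_smul, ← Complex.coe_smul, smul_smul, ← add_smul, smul_smul]
    congr 1
    have : (c:ℂ) ≠ 0 := by exact_mod_cast hc.ne.symm
    push_cast
    field_simp
    rw [mul_comm Complex.I, Complex.re_add_im]
  have h4 : Qs (fun i => ∑ j, A i j • x j) ≤ c ^ 2 * (2 * Qs (fun i => ∑ j, ((A i j).re / c) • x j)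
      + 2 * Qs (fun i => ∑ j, ((A i j).im / c) • x j)) := by
    rw [h3, Qs_smul, Complex.norm_real, Real.norm_eq_abs, sq_abs]
    gcongr
    refine (Qs_add_le _ _).trans (le_of_eq ?_)
    rw [Qs_smul, Complex.norm_I, one_pow, one_mul]
  have hc2 : 0 < c ^ 2 := by positivity
  calc _ ≤ gm ^ 2 * (c ^ 2 * (2 * Qs (fun i => ∑ j, ((A i j).re / c) • x j)
      + 2 * Qs (fun i => ∑ j, ((A i j).im / c) • x j))) := by gcongr
    _ = c ^ 2 * (2 * (gm ^ 2 * Qs (fun i => ∑ j, ((A i j).re / c) • x j))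
      + 2 * (gm ^ 2 * Qs (fun i => ∑ j, ((A i j).im / c) • x j))) := by ring
    _ ≤ c ^ 2 * (2 * (α ^ 2 * Qs x) + 2 * (α ^ 2 * Qs x)) := by gcongr
    _ = _ := by ring
end gauss
section transfer
open MeasureTheory Filter Topology AddCircle

lemma toeplitz_bound (a : ℤ →₀ ℂ) {c : ℝ} (hc : 0 ≤ c)
    (ha : ∀ t : AddCircle (1:ℝ), ‖∑ k ∈ a.support, a k * fourier k t‖ ≤ c)
    (G J : Finset ℤ) (u : J → ℝ) :
    ∑ i : G, ‖∑ j : J, a (i - j) * u j‖ ^ 2 ≤ c ^ 2 * ∑ j, u j ^ 2 := by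
  let e : ℤ → Lp ℂ 2 (haarAddCircle (T := (1:ℝ))) := fourierLp 2
  have he : Orthonormal ℂ e := orthonormal_fourier
  let P : C(AddCircle (1:ℝ), ℂ) := ∑ k ∈ a.support, a k • fourier k
  let f : C(AddCircle (1:ℝ), ℂ) := ∑ j : J, (u j : ℂ) • fourier (j : ℤ)
  let tl : C(AddCircle (1:ℝ), ℂ) →L[ℂ] Lp ℂ 2 (haarAddCircle (T := (1:ℝ))) :=
    ContinuousMap.toLp 2 haarAddCircle ℂ
  have hF : tl f = ∑ j : J, (u j : ℂ) • e j := by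
    simp only [f, map_sum, map_smul]
    rfl
  have hFn : ‖tl f‖ ^ 2 = ∑ j, u j ^ 2 := by
    have he' : Orthonormal ℂ (fun j : J => e j) := he.comp _ Subtype.val_injective
    have h1 := he'.inner_sum (fun j => (u j : ℂ)) (fun j => (u j : ℂ)) Finset.univ
    rw [← hF, inner_self_eq_norm_sq_to_K] at h1
    have h2 : ((‖tl f‖ ^ 2 : ℝ) : ℂ) = ((∑ j, u j ^ 2 : ℝ) : ℂ) := by
      push_cast
      refine h1.trans (Finset.sum_congr rfl fun j _ => ?_)
      rw [Complex.conj_ofReal, sq]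
    exact_mod_cast h2
  have hG : tl (P * f) = ∑ j : J, ∑ k ∈ a.support, (a k * u j) • e (k + j) := by
    have : P * f = ∑ j : J, ∑ k ∈ a.support, (a k * u j) • fourier (k + j) := by
      ext t
      simp only [P, f, ContinuousMap.mul_apply, ContinuousMap.coe_sum, ContinuousMap.coe_smul,
        Finset.sum_apply, Pi.smul_apply, smul_eq_mul, Finset.sum_mul, Finset.mul_sum, fourier_add]
      refine Finset.sum_congr rfl fun j _ => Finset.sum_congr rfl fun k _ => by ring
    rw [this]
    simp only [map_sum, map_smul]
    rfl
  have hGi : ∀ i : ℤ, inner ℂ (e i) (tl (P * f)) = ∑ j : J, a (i - j) * u j := by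
    intro i
    rw [hG, inner_sum]
    refine Finset.sum_congr rfl fun j _ => ?_
    rw [inner_sum]
    simp only [inner_smul_right, orthonormal_iff_ite.mp he]
    rw [Finset.sum_eq_single (i - j)]
    · simp
    · intro k _ hk
      rw [if_neg (by intro h; apply hk; omega), mul_zero]
    · intro h
      rw [Finsupp.notMem_support_iff.mp h]; simp
  have hle : ‖tl (P * f)‖ ≤ c * ‖tl f‖ := by
    apply Lp.norm_le_mul_norm_of_ae_le_mul
    filter_upwards [ContinuousMap.coeFn_toLp (𝕜 := ℂ) (p := 2) (haarAddCircle (T := (1:ℝ))) (P * f),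
      ContinuousMap.coeFn_toLp (𝕜 := ℂ) (p := 2) (haarAddCircle (T := (1:ℝ))) f] with t h1 h2
    simp only [tl]
    rw [h1, h2, ContinuousMap.mul_apply, norm_mul]
    gcongr
    have := ha t
    simpa [P] using this
  have hB := he.sum_inner_products_le (tl (P * f)) (s := G)
  simp only [hGi] at hB
  rw [← Finset.sum_coe_sort] at hB
  refine hB.trans ?_
  rw [← hFn, ← mul_pow]
  gcongr

/-- powers of the coordinate on the circle -/
def zp : Multiplicative ℤ →* C(Circle, ℂ) where
  toFun k := ⟨fun z => ((z ^ (Multiplicative.toAdd k) : Circle) : ℂ),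
    kappa.continuous.comp (continuous_zpow (Multiplicative.toAdd k))⟩
  map_one' := by ext z; simp
  map_mul' k l := by ext z; simp [zpow_add]

lemma zp_apply (k : ℤ) (z : Circle) : zp (Multiplicative.ofAdd k) z = ((z ^ k : Circle) : ℂ) := rfl

def PhiL : AddMonoidAlgebra ℂ ℤ →ₐ[ℂ] C(Circle, ℂ) := AddMonoidAlgebra.lift ℂ _ ℤ zp

variable {X : Type*} [NormedAddCommGroup X] [NormedSpace ℂ X]

def tp (T : X ≃L[ℂ] X) : Multiplicative ℤ →* (X →L[ℂ] X) where
  toFun k := ((T ^ (Multiplicative.toAdd k) : X ≃L[ℂ] X) : X →L[ℂ] X)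
  map_one' := by ext z; simp
  map_mul' k l := by ext z; simp [zpow_add]

lemma tp_apply (T : X ≃L[ℂ] X) (k : ℤ) :
    tp T (Multiplicative.ofAdd k) = ((T ^ k : X ≃L[ℂ] X) : X →L[ℂ] X) := rfl

def PsiL (T : X ≃L[ℂ] X) : AddMonoidAlgebra ℂ ℤ →ₐ[ℂ] (X →L[ℂ] X) :=
  AddMonoidAlgebra.lift ℂ _ ℤ (tp T)

lemma zpow_zpow_apply (T : X ≃L[ℂ] X) (k l : ℤ) (x : X) : (T ^ k) ((T ^ l) x) = (T ^ (k + l)) x := by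
  rw [zpow_add]; rfl

lemma transfer_bound [CompleteSpace X] {α : ℝ} (hα : PropAlphaWith X α) (T : X ≃L[ℂ] X)
    (hT : RBdd {S : X →L[ℂ] X | ∃ k : ℤ, S = (T ^ k : X ≃L[ℂ] X)}) :
    ∃ M : ℝ, 0 ≤ M ∧ ∀ (a : AddMonoidAlgebra ℂ ℤ), ‖PsiL T a‖ ≤ M * ‖PhiL a‖ := by
  obtain ⟨C, hC, hR⟩ := hT.Qs_le
  have hgm := gm_pos
  refine ⟨3 * C ^ 2 * |α| / gm, by positivity, fun a => ?_⟩
  have key : ∀ c : ℝ, ‖PhiL a‖ < c → ∀ x, ‖PsiL T a x‖ ≤ 3 * C ^ 2 * |α| / gm * c * ‖x‖ := by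
    intro c hc x
    have hc0 : 0 < c := (norm_nonneg _).trans_lt hc
    set y := PsiL T a x with hy
    have hysum : y = ∑ k ∈ a.coeff.support, a.coeff k • (T ^ k) x := by
      rw [hy, PsiL, AddMonoidAlgebra.lift_apply, Finsupp.sum]
      simp [tp_apply]
    have hb : ∀ t : AddCircle (1:ℝ), ‖∑ k ∈ a.coeff.support, a.coeff k * fourier k t‖ ≤ c := by
      intro t
      have h1 := (ContinuousMap.norm_coe_le_norm (PhiL a) (AddCircle.toCircle t)).trans hc.le
      refine le_trans (le_of_eq ?_) h1
      congr 1
      rw [PhiL, AddMonoidAlgebra.lift_apply, Finsupp.sum]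
      simp only [ContinuousMap.coe_sum, ContinuousMap.coe_smul,
        Finset.sum_apply, Pi.smul_apply, smul_eq_mul, zp_apply, fourier_apply, toCircle_zsmul]
    obtain ⟨d, hd⟩ : ∃ d : ℕ, ∀ k ∈ a.coeff.support, |k| ≤ d := by
      refine ⟨a.coeff.support.sup Int.natAbs, fun k hk => ?_⟩
      have := Finset.le_sup (f := Int.natAbs) hk
      rw [Int.abs_eq_natAbs]
      exact_mod_cast this
    let G : Finset ℤ := Finset.Icc 1 (2 * d + 1)
    let J : Finset ℤ := Finset.Icc (1 - d) (3 * d + 1)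
    have hGc : G.card = 2 * d + 1 := by simp [G]; omega
    have hJc : J.card = 4 * d + 1 := by simp [J]; omega
    have hz : ∀ i : G, (T ^ (i:ℤ)) (∑ j : J, a.coeff (i - j) • (T ^ (-(j:ℤ))) x) = y := by
      intro i
      rw [map_sum, hysum]
      simp only [map_smul, zpow_zpow_apply]
      rw [Finset.sum_coe_sort J (fun j => a.coeff (i - j) • (T ^ ((i:ℤ) + -j)) x)]
      have hi := Finset.mem_Icc.mp i.2
      symm
      refine Finset.sum_of_injOn (fun k => (i:ℤ) - k) ?_ ?_ ?_ ?_
      · intro k _ l _ h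
        simp only at h; omega
      · intro k hk
        have := abs_le.mp (hd k hk)
        simp only [J, Finset.coe_Icc, Set.mem_Icc]
        omega
      · intro j _ hj
        have : a.coeff (i - j) = 0 := by
          by_contra h
          exact hj ⟨i - j, Finsupp.mem_support_iff.mpr h, by simp⟩
        rw [this, zero_smul]
      · intro k _
        simp
    have h1 : (G.card : ℝ) * ‖y‖ ^ 2 ≤ C ^ 2 * Qs (fun i : G => ∑ j : J, a.coeff (i - j) • (T ^ (-(j:ℤ))) x) := by
      have := hR (fun i : G => ((T ^ (i:ℤ) : X ≃L[ℂ] X) : X →L[ℂ] X))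
        (fun i : G => ∑ j : J, a.coeff (i - j) • (T ^ (-(j:ℤ))) x) (fun i => ⟨i, rfl⟩)
      refine le_trans (le_of_eq ?_) this
      simp only [ContinuousLinearEquiv.coe_coe, hz]
      have h2 := Qs_smul_const (fun _ : G => (1:ℂ)) y
      simp only [one_smul] at h2
      rw [h2]
      simp
    have h2 := Qs_mat hα (fun (i : G) (j : J) => a.coeff (i - j)) hc0
      (fun u => toeplitz_bound a.coeff hc0.le hb G J u) (fun j => (T ^ (-(j:ℤ))) x)
    have h3 : Qs (fun j : J => (T ^ (-(j:ℤ))) x) ≤ C ^ 2 * (J.card * ‖x‖ ^ 2) := by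
      have := hR (fun j : J => ((T ^ (-(j:ℤ)) : X ≃L[ℂ] X) : X →L[ℂ] X))
        (fun j : J => x) (fun i => ⟨_, rfl⟩)
      refine this.trans (le_of_eq ?_)
      have h2 := Qs_smul_const (fun _ : J => (1:ℂ)) x
      simp only [one_smul] at h2
      rw [h2]
      simp
    have hG0 : (0:ℝ) < G.card := by rw [hGc]; positivity
    have hJG : (J.card : ℝ) ≤ 2 * G.card := by
      rw [hGc, hJc]; push_cast; linarith
    have h4 : G.card * (gm ^ 2 * ‖y‖ ^ 2) ≤ G.card * (8 * C ^ 4 * α ^ 2 * c ^ 2 * ‖x‖ ^ 2) := by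
      calc G.card * (gm ^ 2 * ‖y‖ ^ 2) = gm ^ 2 * (G.card * ‖y‖ ^ 2) := by ring
        _ ≤ gm ^ 2 * (C ^ 2 * Qs (fun i : G => ∑ j : J, a.coeff (i - j) • (T ^ (-(j:ℤ))) x)) := by
          gcongr
        _ = C ^ 2 * (gm ^ 2 * Qs (fun i : G => ∑ j : J, a.coeff (i - j) • (T ^ (-(j:ℤ))) x)) := by ring
        _ ≤ C ^ 2 * (4 * c ^ 2 * α ^ 2 * (C ^ 2 * (2 * G.card * ‖x‖ ^ 2))) := by
          refine mul_le_mul_of_nonneg_left (h2.trans ?_) (by positivity)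
          refine mul_le_mul_of_nonneg_left (h3.trans ?_) (by positivity)
          gcongr
        _ = _ := by ring
    have h5 := le_of_mul_le_mul_left h4 hG0
    have h6 : (gm * ‖y‖) ^ 2 ≤ (3 * C ^ 2 * |α| * c * ‖x‖) ^ 2 := by
      have : (3 * C ^ 2 * |α| * c * ‖x‖) ^ 2 = 9 * C ^ 4 * α ^ 2 * c ^ 2 * ‖x‖ ^ 2 := by
        rw [← sq_abs α]; ring
      rw [this, mul_pow]
      have : 0 ≤ C ^ 4 * α ^ 2 * c ^ 2 * ‖x‖ ^ 2 := by positivity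
      linarith
    have h7 := le_of_sq_le_sq h6 (by positivity)
    rw [div_mul_eq_mul_div, div_mul_eq_mul_div, le_div_iff₀ hgm]
    linarith
  refine ContinuousLinearMap.opNorm_le_bound _ (by positivity) fun x => ?_
  have hlim : Tendsto (fun c : ℝ => 3 * C ^ 2 * |α| / gm * c * ‖x‖) (𝓝[>] ‖PhiL a‖)
      (𝓝 (3 * C ^ 2 * |α| / gm * ‖PhiL a‖ * ‖x‖)) :=
    (Continuous.tendsto (by fun_prop) _).mono_left nhdsWithin_le_nhds
  refine ge_of_tendsto hlim ?_
  filter_upwards [self_mem_nhdsWithin] with c hc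
  exact key c hc x
end transfer
section extension
open Filter Topology

lemma star_zp (k : ℤ) : star (zp (Multiplicative.ofAdd k)) = zp (Multiplicative.ofAdd (-k)) := by
  ext z
  rw [ContinuousMap.star_apply, zp_apply, zp_apply, zpow_neg, Circle.coe_inv_eq_conj]
  rfl

lemma PhiL_of (k : ℤ) : PhiL (AddMonoidAlgebra.of ℂ ℤ (Multiplicative.ofAdd k))
    = zp (Multiplicative.ofAdd k) := AddMonoidAlgebra.lift_of _ _

lemma PhiL_kappa : PhiL (AddMonoidAlgebra.of ℂ ℤ (Multiplicative.ofAdd 1)) = kappa := by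
  rw [PhiL_of]
  ext z
  rw [zp_apply, zpow_one, kappa_apply]

def laurentStar : StarSubalgebra ℂ C(Circle, ℂ) where
  toSubalgebra := PhiL.range
  star_mem' := by
    rintro _ ⟨a, rfl⟩
    induction a using AddMonoidAlgebra.induction_on with
    | of m => exact ⟨AddMonoidAlgebra.of ℂ ℤ (Multiplicative.ofAdd (-m)), by
        have := star_zp m
        rw [← PhiL_of, ← PhiL_of] at this
        exact this.symm⟩
    | add x y hx hy =>
      have := PhiL.range.add_mem hx hy
      rw [← star_add] at this
      simpa using this
    | smul r x hx =>
      have := PhiL.range.smul_mem hx (star r)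
      rw [← star_smul] at this
      simpa using this

lemma PhiL_dense : DenseRange PhiL := by
  have h : laurentStar.topologicalClosure = ⊤ := by
    apply ContinuousMap.starSubalgebra_topologicalClosure_eq_top_of_separatesPoints
    intro x y hxy
    refine ⟨_, ⟨kappa, ⟨_, PhiL_kappa⟩, rfl⟩, ?_⟩
    intro h
    apply hxy
    exact Circle.ext h
  intro f
  have hf : f ∈ laurentStar.topologicalClosure := by rw [h]; trivial
  exact hf

variable {X : Type*} [NormedAddCommGroup X] [NormedSpace ℂ X]

lemma forward [CompleteSpace X] {α : ℝ} (hα : PropAlphaWith X α) (T : X ≃L[ℂ] X)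
    (hT : RBdd {S : X →L[ℂ] X | ∃ k : ℤ, S = (T ^ k : X ≃L[ℂ] X)}) :
    ∃ w : C(Circle, ℂ) →ₐ[ℂ] (X →L[ℂ] X),
        w kappa = (T : X →L[ℂ] X) ∧
        ∃ M : ℝ, ∀ f : C(Circle, ℂ), ‖w f‖ ≤ M * ‖f‖ := by
  obtain ⟨M, hM, hb⟩ := transfer_bound hα T hT
  let W : C(Circle, ℂ) →L[ℂ] (X →L[ℂ] X) :=
    LinearMap.extendOfNorm (PsiL T).toLinearMap PhiL.toLinearMap
  have hd : DenseRange PhiL.toLinearMap := PhiL_dense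
  have hW : ∀ a, W (PhiL a) = PsiL T a := fun a =>
    LinearMap.extendOfNorm_eq (f := (PsiL T).toLinearMap) hd ⟨M, hb⟩ a
  have h1 : W 1 = 1 := by
    have := hW 1
    rwa [map_one PhiL, map_one (PsiL T)] at this
  have hmul : ∀ f g, W (f * g) = W f * W g := by
    intro f g
    refine PhiL_dense.induction_on₂ (p := fun f g => W (f * g) = W f * W g) ?_ ?_ f g
    · exact isClosed_eq (by fun_prop) (by fun_prop)
    · intro a b
      rw [← map_mul, hW, hW, hW, map_mul]
  refine ⟨AlgHom.ofLinearMap W.toLinearMap h1 hmul, ?_, M, fun f => ?_⟩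
  · change W kappa = _
    rw [← PhiL_kappa, hW, PsiL, AddMonoidAlgebra.lift_of, tp_apply, zpow_one]
  · exact LinearMap.norm_extendOfNorm_apply_le (f := (PsiL T).toLinearMap) hd M hb f
end extension

/-- Proposition 6.3 (2): on a complex Banach space with property (α), the set
`{T^k : k ∈ ℤ}` is R-bounded iff there is a bounded unital algebra homomorphism
`w : C(𝕋) → B(X)` with `w(κ) = T`. -/
theorem rBdd_zpowers_iff_circle_homomorphism
    {X : Type*} [NormedAddCommGroup X] [NormedSpace ℂ X] [CompleteSpace X]
    (hX : ∃ α : ℝ, PropAlphaWith X α)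
    (T : X ≃L[ℂ] X) :
    RBdd {S : X →L[ℂ] X | ∃ k : ℤ, S = (T ^ k : X ≃L[ℂ] X)} ↔
      ∃ w : C(Circle, ℂ) →ₐ[ℂ] (X →L[ℂ] X),
        w kappa = (T : X →L[ℂ] X) ∧
        ∃ M : ℝ, ∀ f : C(Circle, ℂ), ‖w f‖ ≤ M * ‖f‖ := by
  obtain ⟨α, hα⟩ := hX
  exact ⟨fun h => forward hα T h, fun ⟨w, hT, hw⟩ => backward hα T w hT hw⟩

end
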